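/- arXiv:2511.08073 — 4 statements merged into one kernel-verified Lean document; each statement's English description precedes it below -/
import Mathlib

section
/- In the setting of the empirical corrected loss: fix d, t ≥ 1, vectors x_1,…,x_t, n_1,…,n_t ∈ ℝ^d, payments c_1,…,c_t ∈ [0,1], symmetric matrices Σ_x and Σ_n(c) for c ∈ [0,1], θ* ∈ ℝ^d, λ ∈ ℝ, S > 0 with ‖θ*‖ ≤ S, and let x̂_s = x_s+n_s, y_s = x_s·θ*. Suppose ‖Σ_{s=1}^t (x̂_s x̂_sᵀ − Σ_x − Σ_n(c_s))‖_op ≤ a, ‖Σ_{s=1}^t (x_s x_sᵀ − Σ_x)‖_op ≤ b, and ‖Σ_{s=1}^t n_s x_sᵀ‖_op ≤ e. Then for every c ∈ [0,1] and every ν with ‖ν‖ ≤ S: |L̂_t(c,ν) − t·ℓ(c,ν)| ≤ S²a + 3S²b + 2S²e, where L̂_t(c,ν) = Σ_{s=1}^t [ (x̂_s·ν − y_s)² + ν·((Σ_n(c) − Σ_n(c_s))ν) + λc ] and ℓ(c,ν) = ν·((Σ_x+Σ_n(c))ν) − 2ν·(Σ_xθ*) + θ*·(Σ_xθ*) + λc.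 -/
/-!
With `x̂ s = x s + n s`, expanding the square and splitting the cross matrix as
`x̂ s (x s)ᵀ = x s (x s)ᵀ + n s (x s)ᵀ` gives the exact identity
`L̂ - t ℓ = ν·(A ν) - 2 ν·(B θ) - 2 ν·(E θ) + θ·(B θ)`,
where `A`, `B`, `E` are the three error matrices of the hypotheses. Each of the four terms is
bounded by `abs_bilin_le`, that is, by Cauchy-Schwarz and the definition of the operator norm.
-/

open Matrix Finset

/-- The key inequality `|u·(M v)| ≤ ‖u‖ ‖v‖ ‖M‖`, for `u`, `v` in the ball of radius `S`. -/
lemma abs_bilin_le {d : ℕ} (M : Matrix (Fin d) (Fin d) ℝ) (u v : EuclideanSpace ℝ (Fin d))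
    {S m : ℝ} (hu : ‖u‖ ≤ S) (hv : ‖v‖ ≤ S) (hM : ‖Matrix.toEuclideanCLM (𝕜 := ℝ) M‖ ≤ m) :
    |u ⬝ᵥ (M *ᵥ v)| ≤ S ^ 2 * m := by
  have hin : u ⬝ᵥ (M *ᵥ v) = inner ℝ u (Matrix.toEuclideanCLM (𝕜 := ℝ) M v) := by
    rw [EuclideanSpace.inner_eq_star_dotProduct, Matrix.ofLp_toEuclideanCLM, star_trivial,
      dotProduct_comm]
  have hS : 0 ≤ S := (norm_nonneg u).trans hu
  rw [hin]
  calc |inner ℝ u (Matrix.toEuclideanCLM (𝕜 := ℝ) M v)|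
      ≤ ‖u‖ * ‖Matrix.toEuclideanCLM (𝕜 := ℝ) M v‖ := abs_real_inner_le_norm _ _
    _ ≤ ‖u‖ * (‖Matrix.toEuclideanCLM (𝕜 := ℝ) M‖ * ‖v‖) := by
        gcongr
        exact ContinuousLinearMap.le_opNorm _ _
    _ ≤ S * (m * S) := by
        have hm : 0 ≤ m := (norm_nonneg _).trans hM
        gcongr
    _ = S ^ 2 * m := by ring

lemma bilin_sum {d t : ℕ} (M : Fin t → Matrix (Fin d) (Fin d) ℝ) (u v : Fin d → ℝ) :
    u ⬝ᵥ ((∑ s, M s) *ᵥ v) = ∑ s, u ⬝ᵥ (M s *ᵥ v) := by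
  rw [Matrix.sum_mulVec, dotProduct_sum]

lemma bilin_vecMulVec {d : ℕ} (p q u v : Fin d → ℝ) :
    u ⬝ᵥ (vecMulVec p q *ᵥ v) = (p ⬝ᵥ u) * (q ⬝ᵥ v) := by
  rw [Matrix.vecMulVec_mulVec, dotProduct_comm p u]
  simp [mul_comm]

/-- If the operator norms of the three empirical covariance error matrices are
bounded by `a`, `b`, `e` respectively, then for every `c ∈ [0,1]` and `‖ν‖ ≤ S` (with
`‖θ*‖ ≤ S`), `|L̂_t(c,ν) − t·ℓ(c,ν)| ≤ S²a + 3S²b + 2S²e`. -/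
theorem statement_5 (d t : ℕ) (ht : 1 ≤ t) (hd : 1 ≤ d)
    (x n : Fin t → EuclideanSpace ℝ (Fin d)) (c : Fin t → ℝ)
    (hc : ∀ s, c s ∈ Set.Icc (0:ℝ) 1)
    (Sx : Matrix (Fin d) (Fin d) ℝ) (hSx : Sx.IsSymm)
    (Sn : ℝ → Matrix (Fin d) (Fin d) ℝ) (hSn : ∀ c' ∈ Set.Icc (0:ℝ) 1, (Sn c').IsSymm)
    (θs : EuclideanSpace ℝ (Fin d)) (lam : ℝ) (S : ℝ) (hS : 0 < S) (hθs : ‖θs‖ ≤ S)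
    (a b e : ℝ)
    (ha : ‖Matrix.toEuclideanCLM (𝕜 := ℝ)
      (∑ s : Fin t, (vecMulVec (x s + n s) (x s + n s) - Sx - Sn (c s)))‖ ≤ a)
    (hb : ‖Matrix.toEuclideanCLM (𝕜 := ℝ)
      (∑ s : Fin t, (vecMulVec (x s) (x s) - Sx))‖ ≤ b)
    (he : ‖Matrix.toEuclideanCLM (𝕜 := ℝ)
      (∑ s : Fin t, vecMulVec (n s) (x s))‖ ≤ e) :
    ∀ cc ∈ Set.Icc (0:ℝ) 1, ∀ ν : EuclideanSpace ℝ (Fin d), ‖ν‖ ≤ S →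
      |(∑ s : Fin t, (((x s + n s) ⬝ᵥ ν - x s ⬝ᵥ θs) ^ 2
            + ν ⬝ᵥ ((Sn cc - Sn (c s)) *ᵥ ν) + lam * cc))
          - (t : ℝ) * (ν ⬝ᵥ ((Sx + Sn cc) *ᵥ ν) - 2 * (ν ⬝ᵥ (Sx *ᵥ θs))
            + θs ⬝ᵥ (Sx *ᵥ θs) + lam * cc)|
        ≤ S ^ 2 * a + 3 * S ^ 2 * b + 2 * S ^ 2 * e := by
  intro cc _ ν hν
  have h1 := abs_le.mp (abs_bilin_le _ ν ν hν hν ha)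
  have h2 := abs_le.mp (abs_bilin_le _ ν θs hν hθs hb)
  have h3 := abs_le.mp (abs_bilin_le _ ν θs hν hθs he)
  have h4 := abs_le.mp (abs_bilin_le _ θs θs hθs hθs hb)
  -- The error decomposition is proved summand by summand.
  have key : (∑ s : Fin t, (((x s + n s) ⬝ᵥ ν - x s ⬝ᵥ θs) ^ 2
            + ν ⬝ᵥ ((Sn cc - Sn (c s)) *ᵥ ν) + lam * cc))
          - (t : ℝ) * (ν ⬝ᵥ ((Sx + Sn cc) *ᵥ ν) - 2 * (ν ⬝ᵥ (Sx *ᵥ θs))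
            + θs ⬝ᵥ (Sx *ᵥ θs) + lam * cc)
      = ν ⬝ᵥ ((∑ s : Fin t, (vecMulVec (x s + n s) (x s + n s) - Sx - Sn (c s))) *ᵥ ν)
        - 2 * (ν ⬝ᵥ ((∑ s : Fin t, (vecMulVec (x s) (x s) - Sx)) *ᵥ θs))
        - 2 * (ν ⬝ᵥ ((∑ s : Fin t, vecMulVec (n s) (x s)) *ᵥ θs))
        + θs ⬝ᵥ ((∑ s : Fin t, (vecMulVec (x s) (x s) - Sx)) *ᵥ θs) := by
    have hconst : ∀ r : ℝ, (t : ℝ) * r = ∑ _s : Fin t, r := fun r => by simp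
    rw [hconst, bilin_sum, bilin_sum, bilin_sum, bilin_sum, mul_sum, mul_sum,
      ← sum_sub_distrib, ← sum_sub_distrib, ← sum_sub_distrib, ← sum_add_distrib]
    refine sum_congr rfl fun s _ => ?_
    simp only [Matrix.sub_mulVec, Matrix.add_mulVec, dotProduct_sub, dotProduct_add,
      bilin_vecMulVec, WithLp.ofLp_add, add_dotProduct]
    ring
  rw [key, abs_le]
  constructor <;> linarith [h1.1, h1.2, h2.1, h2.2, h3.1, h3.2, h4.1, h4.2]
end

section
/- Let K ≥ 1 be an integer and k ∈ {1,…,K}. Define f(c) = (1−c)/(1+c), c_k = 1/2 + (k−1)/(4K), c_{k+1} = 1/2 + k/(4K), and the modified noise-variance profile σ_k²(c) = f(c_k) + 2·((c − c_k)/(c_{k+1} − c_k))·(f(c_{k+1}) − f(c_k)) for c ∈ [c_k, (c_k + c_{k+1})/2), σ_k²(c) = f(c_{k+1}) for c ∈ [(c_k + c_{k+1})/2, c_{k+1}), and σ_k²(c) = f(c) otherwise. Then for every c ∈ [c_k, c_{k+1}): 0 ≤ f(c) − σ_k²(c) ≤ c_{k+1} − c_k = 1/(4K). -/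
/-!
On `[1/2, 1]` one has `f x - f y = 2 (y - x) / ((1 + x) (1 + y))`, so `f` is decreasing and
`1`-Lipschitz there, since `(1 + x) (1 + y) ≥ 9/4 ≥ 2`. On the second half of the interval the
gap is `f c - f c_{k+1}`, and both bounds are immediate. On the first half, with `t = c - c_k`,
the gap equals `2 t / (1 + c_k) * (2 / (1 + c_{k+1}) - 1 / (1 + c))`; it is nonnegative because
`2 (1 + c) ≥ 3 ≥ 1 + c_{k+1}`, and at most `f c_k - f c_{k+1}` because `2 t ≤ c_{k+1} - c_k`.
-/

/-- The map `x ↦ (1 - x) / (1 + x)` is decreasing and `1`-Lipschitz on `[1/2, ∞)`. -/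
lemma profile_sub_bounds {x y : ℝ} (hx : 1 / 2 ≤ x) (hxy : x ≤ y) :
    0 ≤ (1 - x) / (1 + x) - (1 - y) / (1 + y) ∧
      (1 - x) / (1 + x) - (1 - y) / (1 + y) ≤ y - x := by
  have hx' : 0 < 1 + x := by linarith
  have hy' : 0 < 1 + y := by linarith
  have e : (1 - x) / (1 + x) - (1 - y) / (1 + y) = 2 * (y - x) / ((1 + x) * (1 + y)) := by
    field_simp
    ring
  have hd : 0 ≤ y - x := by linarith
  rw [e]
  refine ⟨by positivity, ?_⟩
  rw [div_le_iff₀ (by positivity)]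
  have h2 : 2 ≤ (1 + x) * (1 + y) := by nlinarith
  nlinarith

/-- The bounds on the first half `a ≤ c ≤ (a + b) / 2`, where the modified profile is linear. -/
lemma profile_sub_linear_bounds {a b c : ℝ} (ha : 1 / 2 ≤ a) (hab : a < b) (hb : b ≤ 1)
    (hac : a ≤ c) (hc : c ≤ (a + b) / 2) :
    0 ≤ (1 - c) / (1 + c) - ((1 - a) / (1 + a) +
        2 * ((c - a) / (b - a)) * ((1 - b) / (1 + b) - (1 - a) / (1 + a))) ∧
      (1 - c) / (1 + c) - ((1 - a) / (1 + a) +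
        2 * ((c - a) / (b - a)) * ((1 - b) / (1 + b) - (1 - a) / (1 + a))) ≤ b - a := by
  have ha' : 0 < 1 + a := by linarith
  have hb' : 0 < 1 + b := by linarith
  have hc' : 0 < 1 + c := by linarith
  have hd : 0 < b - a := by linarith
  constructor
  · have e : (1 - c) / (1 + c) - ((1 - a) / (1 + a) +
        2 * ((c - a) / (b - a)) * ((1 - b) / (1 + b) - (1 - a) / (1 + a))) =
        2 * (c - a) * (2 * (1 + c) - (1 + b)) / ((1 + a) * (1 + b) * (1 + c)) := by
      have hd' := hd.ne'
      field_simp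
      ring
    rw [e]
    have h1 : 0 ≤ c - a := by linarith
    have h2 : 0 ≤ 2 * (1 + c) - (1 + b) := by linarith
    positivity
  · obtain ⟨h1, h2⟩ := profile_sub_bounds ha hab.le
    have h3 := (profile_sub_bounds ha hac).1
    have h4 : 2 * ((c - a) / (b - a)) ≤ 1 := by
      rw [← mul_div_assoc, div_le_one hd]
      linarith
    nlinarith [mul_le_mul_of_nonneg_right h4 h1]

/-- For the modified noise-variance profile `σ_k²` (linear decrease on the
first half of `[c_k, c_{k+1})`, constant `f(c_{k+1})` on the second half, `f` elsewhere),
for every `c ∈ [c_k, c_{k+1})`: `0 ≤ f(c) − σ_k²(c) ≤ c_{k+1} − c_k = 1/(4K)`. -/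
theorem statement_15 (K k : ℕ) (hK : 1 ≤ K) (hk : 1 ≤ k) (hkK : k ≤ K)
    (f : ℝ → ℝ) (hf : ∀ c, f c = (1 - c) / (1 + c))
    (ck ck1 : ℝ)
    (hck : ck = 1/2 + ((k : ℝ) - 1) / (4 * K)) (hck1 : ck1 = 1/2 + (k : ℝ) / (4 * K))
    (σ : ℝ → ℝ)
    (hσ : ∀ c, σ c =
      if ck ≤ c ∧ c < (ck + ck1) / 2 then
        f ck + 2 * ((c - ck) / (ck1 - ck)) * (f ck1 - f ck)
      else if (ck + ck1) / 2 ≤ c ∧ c < ck1 then f ck1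
      else f c) :
    ck1 - ck = 1 / (4 * K) ∧
    ∀ c, ck ≤ c → c < ck1 → 0 ≤ f c - σ c ∧ f c - σ c ≤ ck1 - ck := by
  have hK0 : (1 : ℝ) ≤ K := by exact_mod_cast hK
  have hk0 : (1 : ℝ) ≤ k := by exact_mod_cast hk
  have hkK0 : (k : ℝ) ≤ K := by exact_mod_cast hkK
  have hd : ck1 - ck = 1 / (4 * K) := by
    rw [hck, hck1]
    ring
  refine ⟨hd, fun c h1 h2 => ?_⟩
  have ha : 1 / 2 ≤ ck := by
    have : 0 ≤ ((k : ℝ) - 1) / (4 * K) := div_nonneg (by linarith) (by linarith)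
    linarith
  have hb : ck1 ≤ 1 := by
    have : (k : ℝ) / (4 * K) ≤ 1 / 2 := by
      rw [div_le_iff₀ (by linarith)]
      linarith
    linarith
  rw [hσ]
  split_ifs with h3 h4
  · simp only [hf]
    exact profile_sub_linear_bounds ha (by linarith) hb h1 h3.2.le
  · simp only [hf]
    obtain ⟨h5, h6⟩ := profile_sub_bounds (ha.trans h1) h2.le
    exact ⟨h5, by linarith⟩
  · -- The two halves cover the interval, so this case is vacuous.
    exact absurd ⟨not_lt.mp fun h => h3 ⟨h1, h⟩, h2⟩ h4
end

section
/- Let K ≥ 1 be an integer and k ∈ {1,…,K}. With f(c) = (1−c)/(1+c), c_k = 1/2 + (k−1)/(4K), c_{k+1} = 1/2 + k/(4K), and the modified noise-variance profile σ_k²(c) = f(c_k) + 2·((c − c_k)/(c_{k+1} − c_k))·(f(c_{k+1}) − f(c_k)) for c ∈ [c_k, (c_k + c_{k+1})/2), σ_k²(c) = f(c_{k+1}) for c ∈ [(c_k + c_{k+1})/2, c_{k+1}), and σ_k²(c) = f(c) otherwise, the following holds for every c ∈ [0,1]: KL( N(0, f(c)) ‖ N(0, σ_k²(c)) ) ≤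 16·(c_{k+1} − c_k)²·𝟙{c ∈ [c_k, c_{k+1})} = (1/K²)·𝟙{c ∈ [c_k, c_{k+1})}. In particular, for c outside [c_k, c_{k+1}) the two Gaussian measures coincide and the divergence is 0. -/
/-!
Write `m = f(c_{k+1})`, `D = f(c_k) - f(c_{k+1})` and `d = c_{k+1} - c_k = 1/(4K)`. On
`[c_k, c_{k+1})` both `v = f(c)` and `w = σ_k²(c)` lie in `[m, m + D]`, because `f` is decreasing
and the modified profile interpolates between its endpoint values. The bound
`log r ≥ 1 - 1/r` gives `KL ≤ (v - w)² / (2 v w) ≤ D² / (2 m²)`, and since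
`D = 2d / ((1 + c_k)(1 + c_{k+1}))` with `1/2 ≤ c_k` and `c_{k+1} ≤ 3/4`, one has
`D ≤ (16/3) d m`, whence `KL ≤ (128/9) d² ≤ 16 d²`. Outside the interval the two variances agree.
-/

/-- The Kullback–Leibler divergence `KL(N(0,v) ‖ N(0,w))` between centered real Gaussian
measures with variances `v` and `w`: it equals `(1/2)(v/w − ln(v/w) − 1)` when the variances
are positive, and `0` in the degenerate case `v = w = 0` (both measures are the Dirac mass
at `0`). -/
noncomputable def klGaussian (v w : ℝ) : ℝ :=
  if v = 0 ∧ w = 0 then 0 else (1/2) * (v / w - Real.log (v / w) - 1)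

lemma klGaussian_self (v : ℝ) : klGaussian v v = 0 := by
  unfold klGaussian
  by_cases hv : v = 0
  · simp [hv]
  · simp [hv]

/-- The divergence is at most half the squared difference of variances over their product. -/
lemma klGaussian_le_of_sq_le {v w C : ℝ} (hv : 0 < v) (hw : 0 < w)
    (h : (v - w) ^ 2 ≤ 2 * C * (v * w)) : klGaussian v w ≤ C := by
  unfold klGaussian
  rw [if_neg (fun h => hv.ne' h.1)]
  have hlog := Real.one_sub_inv_le_log_of_pos (div_pos hv hw)
  have hsq : v / w + (v / w)⁻¹ - 2 = (v - w) ^ 2 / (v * w) := by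
    field_simp
    ring
  have hle : (v - w) ^ 2 / (v * w) ≤ 2 * C := by
    rwa [div_le_iff₀ (mul_pos hv hw)]
  linarith

/-- Variances confined to `[m, M]` with `M - m ≤ (16/3) d m` have divergence at most `16 d²`. -/
lemma klGaussian_le_of_mem_Icc {v w m M d : ℝ} (hm : 0 < m)
    (hD : M - m ≤ 16 / 3 * d * m) (hv : v ∈ Set.Icc m M) (hw : w ∈ Set.Icc m M) :
    klGaussian v w ≤ 16 * d ^ 2 := by
  obtain ⟨hv1, hv2⟩ := hv
  obtain ⟨hw1, hw2⟩ := hw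
  refine klGaussian_le_of_sq_le (hm.trans_le hv1) (hm.trans_le hw1) ?_
  have h1 : (v - w) ^ 2 ≤ (16 / 3 * d * m) ^ 2 :=
    sq_le_sq' (by linarith) (by linarith)
  have h2 : m * m ≤ v * w := mul_le_mul hv1 hw1 hm.le (hm.le.trans hv1)
  nlinarith [mul_le_mul_of_nonneg_left h2 (sq_nonneg d), sq_nonneg (d * m)]

/-- For the modified noise-variance profile `σ_k²`, for every `c ∈ [0,1]`,
`KL(N(0,f(c)) ‖ N(0,σ_k²(c))) ≤ 16(c_{k+1}−c_k)²·𝟙{c ∈ [c_k,c_{k+1})} = (1/K²)·𝟙{...}`;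
in particular, outside `[c_k, c_{k+1})` the two Gaussian measures coincide and the
divergence is `0`. -/
theorem statement_17 (K k : ℕ) (hK : 1 ≤ K) (hk : 1 ≤ k) (hkK : k ≤ K)
    (f : ℝ → ℝ) (hf : ∀ c, f c = (1 - c) / (1 + c))
    (ck ck1 : ℝ)
    (hck : ck = 1/2 + ((k : ℝ) - 1) / (4 * K)) (hck1 : ck1 = 1/2 + (k : ℝ) / (4 * K))
    (σ : ℝ → ℝ)
    (hσ : ∀ c, σ c =
      if ck ≤ c ∧ c < (ck + ck1) / 2 then
        f ck + 2 * ((c - ck) / (ck1 - ck)) * (f ck1 - f ck)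
      else if (ck + ck1) / 2 ≤ c ∧ c < ck1 then f ck1
      else f c) :
    (∀ c ∈ Set.Icc (0:ℝ) 1,
      klGaussian (f c) (σ c)
        ≤ 16 * (ck1 - ck) ^ 2 * (if ck ≤ c ∧ c < ck1 then 1 else 0)) ∧
    16 * (ck1 - ck) ^ 2 = 1 / (K : ℝ) ^ 2 ∧
    (∀ c ∈ Set.Icc (0:ℝ) 1, ¬(ck ≤ c ∧ c < ck1) →
      σ c = f c ∧ klGaussian (f c) (σ c) = 0) := by
  have hK' : (1 : ℝ) ≤ K := by exact_mod_cast hK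
  have hk' : (1 : ℝ) ≤ k := by exact_mod_cast hk
  have hkK' : (k : ℝ) ≤ K := by exact_mod_cast hkK
  have hK0 : (0 : ℝ) < K := by linarith
  have hd : ck1 - ck = 1 / (4 * K) := by
    rw [hck, hck1]
    ring
  have hd0 : 0 < ck1 - ck := by
    rw [hd]
    positivity
  have ha : 1 / 2 ≤ ck := by
    have : 0 ≤ ((k : ℝ) - 1) / (4 * K) := div_nonneg (by linarith) (by linarith)
    linarith
  have hb : ck1 ≤ 3 / 4 := by
    have : (k : ℝ) / (4 * K) ≤ 1 / 4 := by
      rw [div_le_iff₀ (by linarith)]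
      linarith
    linarith
  have hσ_out : ∀ c, ¬(ck ≤ c ∧ c < ck1) → σ c = f c := by
    intro c hc
    rw [hσ, if_neg (fun h => hc ⟨h.1, by linarith [h.2]⟩),
      if_neg (fun h => hc ⟨by linarith [h.1], h.2⟩)]
  -- `f` is decreasing to the right of its pole.
  have hanti : ∀ x y, -1 < x → x ≤ y → f y ≤ f x := by
    intro x y hx hxy
    rw [hf, hf, div_le_div_iff₀ (by linarith) (by linarith)]
    nlinarith
  have hm : 0 < f ck1 := by
    rw [hf]
    exact div_pos (by linarith) (by linarith)
  have hD : f ck - f ck1 ≤ 16 / 3 * (ck1 - ck) * f ck1 := by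
    have hdiff : f ck - f ck1 = 2 * (ck1 - ck) / ((1 + ck) * (1 + ck1)) := by
      rw [hf, hf]
      have h1 : 1 + ck ≠ 0 := by linarith
      have h2 : 1 + ck1 ≠ 0 := by linarith
      field_simp
      ring
    have hcancel : 16 / 3 * (ck1 - ck) * f ck1 * ((1 + ck) * (1 + ck1))
        = 16 / 3 * (ck1 - ck) * ((1 - ck1) * (1 + ck)) := by
      rw [hf]
      have h2 : 1 + ck1 ≠ 0 := by linarith
      field_simp
    rw [hdiff, div_le_iff₀ (mul_pos (by linarith) (by linarith)), hcancel]
    have h38 : 3 / 8 ≤ (1 - ck1) * (1 + ck) := by nlinarith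
    nlinarith
  refine ⟨?_, ?_, ?_⟩
  · intro c _
    by_cases hc : ck ≤ c ∧ c < ck1
    · rw [if_pos hc, mul_one]
      have hab : f ck1 ≤ f ck := hanti _ _ (by linarith) (by linarith)
      refine klGaussian_le_of_mem_Icc hm hD
        ⟨hanti _ _ (by linarith [hc.1]) hc.2.le, hanti _ _ (by linarith) hc.1⟩ ?_
      rw [hσ]
      by_cases hmid : c < (ck + ck1) / 2
      · rw [if_pos ⟨hc.1, hmid⟩]
        -- The interpolation parameter `t` lies in `[0, 1/2]`.
        set t := (c - ck) / (ck1 - ck) with ht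
        have ht0 : 0 ≤ t := div_nonneg (by linarith [hc.1]) hd0.le
        have ht1 : t ≤ 1 / 2 := by
          rw [ht, div_le_iff₀ hd0]
          linarith
        constructor <;> nlinarith
      · rw [if_neg (fun h => hmid h.2), if_pos ⟨not_lt.mp hmid, hc.2⟩]
        exact ⟨le_rfl, hab⟩
    · rw [if_neg hc, mul_zero, hσ_out c hc, klGaussian_self]
  · rw [hd]
    field_simp
    norm_num
  · intro c _ hc
    rw [hσ_out c hc]
    exact ⟨rfl, klGaussian_self _⟩
end

section
/- Let K ≥ 1 be an integer and k ∈ {1,…,K}. With f(c) = (1−c)/(1+c), c_k = 1/2 + (k−1)/(4K), c_{k+1} = 1/2 + k/(4K), and the modified noise-variance profile σ_k²(c) = f(c_k) + 2·((c − c_k)/(c_{k+1} − c_k))·(f(c_{k+1}) − f(c_k)) for c ∈ [c_k, (c_k + c_{k+1})/2), σ_k²(c) = f(c_{k+1}) for c ∈ [(c_k + c_{k+1})/2, c_{k+1}), and σ_k²(c) = f(c) otherwise, define the optimal loss of instance k at payment c by ℓ_k*(c) = σ_k²(c)/(1 + σ_k²(c)) + c/2. Then inf_{c ∈ [0,1]}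 ℓ_k*(c) ≤ 1/2 − (c_{k+1} − c_k)/4 = 1/2 − 1/(16K); in fact ℓ_k*((c_k + c_{k+1})/2) = 1/2 − (c_{k+1} − c_k)/4. -/
/-!
Since `v/(1+v) = (1-c)/2` for `v = (1-c)/(1+c)`, the midpoint of `[c_k, c_{k+1}]`, where the profile
already takes the value `f(c_{k+1})`, has loss `(1-c_{k+1})/2 + (c_k+c_{k+1})/4`. The bound on the
infimum follows because the midpoint lies in `[0,1]` and the loss is bounded below by `0` there:
the profile is nonnegative, being on the sloped piece a convex combination of `f(c_k)` and
`f(c_{k+1})`.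
-/

/-- For the modified instance `k` with optimal loss
`ℓ_k*(c) = σ_k²(c)/(1 + σ_k²(c)) + c/2`, one has
`ℓ_k*((c_k+c_{k+1})/2) = 1/2 − (c_{k+1}−c_k)/4`, and hence
`inf_{c ∈ [0,1]} ℓ_k*(c) ≤ 1/2 − 1/(16K)`. -/
theorem statement_18 (K k : ℕ) (hK : 1 ≤ K) (hk : 1 ≤ k) (hkK : k ≤ K)
    (f : ℝ → ℝ) (hf : ∀ c, f c = (1 - c) / (1 + c))
    (ck ck1 : ℝ)
    (hck : ck = 1/2 + ((k : ℝ) - 1) / (4 * K)) (hck1 : ck1 = 1/2 + (k : ℝ) / (4 * K))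
    (σ : ℝ → ℝ)
    (hσ : ∀ c, σ c =
      if ck ≤ c ∧ c < (ck + ck1) / 2 then
        f ck + 2 * ((c - ck) / (ck1 - ck)) * (f ck1 - f ck)
      else if (ck + ck1) / 2 ≤ c ∧ c < ck1 then f ck1
      else f c)
    (ℓk : ℝ → ℝ) (hℓk : ∀ c, ℓk c = σ c / (1 + σ c) + c / 2) :
    ℓk ((ck + ck1) / 2) = 1/2 - (ck1 - ck) / 4 ∧
    1/2 - (ck1 - ck) / 4 = 1/2 - 1 / (16 * K) ∧
    sInf (ℓk '' Set.Icc (0:ℝ) 1) ≤ 1/2 - 1 / (16 * K) := by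
  have hK0 : (0 : ℝ) < K := by exact_mod_cast hK
  have hk1 : (1 : ℝ) ≤ k := by exact_mod_cast hk
  have hkK' : (k : ℝ) ≤ K := by exact_mod_cast hkK
  have hdiff : ck1 - ck = 1 / (4 * K) := by
    rw [hck, hck1]; field_simp; ring
  have hlt : ck < ck1 := by
    have : (0 : ℝ) < 1 / (4 * K) := by positivity
    linarith
  have hck_ge : 1 / 2 ≤ ck := by
    have : 0 ≤ ((k : ℝ) - 1) / (4 * K) := div_nonneg (by linarith) (by positivity)
    linarith
  have hck1_le : ck1 ≤ 3 / 4 := by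
    have : (k : ℝ) / (4 * K) ≤ 1 / 4 := by
      rw [div_le_div_iff₀ (by positivity) (by norm_num)]; linarith
    linarith
  have hmid : ℓk ((ck + ck1) / 2) = 1/2 - (ck1 - ck) / 4 := by
    have hσm : σ ((ck + ck1) / 2) = f ck1 := by
      rw [hσ, if_neg (fun h => lt_irrefl _ h.2), if_pos ⟨le_rfl, by linarith⟩]
    have h1 : 1 + ck1 ≠ 0 := by linarith
    have h2 : 1 + (1 - ck1) / (1 + ck1) = 2 / (1 + ck1) := by
      field_simp; ring
    rw [hℓk, hσm, hf, h2]
    field_simp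
    ring
  have heq : 1/2 - (ck1 - ck) / 4 = 1/2 - 1 / (16 * (K : ℝ)) := by
    rw [hdiff]; field_simp; ring
  refine ⟨hmid, heq, ?_⟩
  have hf0 : ∀ c, 0 ≤ c → c ≤ 1 → 0 ≤ f c := fun c h0 h1 => by
    rw [hf]; exact div_nonneg (by linarith) (by linarith)
  have hσ0 : ∀ c, 0 ≤ c → c ≤ 1 → 0 ≤ σ c := by
    intro c h0 h1
    have hfk := hf0 ck (by linarith) (by linarith)
    have hfk1 := hf0 ck1 (by linarith) (by linarith)
    rw [hσ]
    split_ifs with hA hB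
    · have ht0 : 0 ≤ (c - ck) / (ck1 - ck) := div_nonneg (by linarith [hA.1]) (by linarith)
      have ht1 : (c - ck) / (ck1 - ck) ≤ 1 / 2 := by
        rw [div_le_iff₀ (by linarith)]; linarith [hA.2]
      nlinarith [mul_nonneg ht0 hfk1, mul_nonneg (sub_nonneg.2 ht1) hfk]
    · exact hfk1
    · exact hf0 c h0 h1
  rw [← heq, ← hmid]
  refine csInf_le ⟨0, ?_⟩ ⟨_, ⟨by linarith, by linarith⟩, rfl⟩
  rintro _ ⟨c, ⟨h0, h1⟩, rfl⟩
  have := hσ0 c h0 h1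
  rw [hℓk]
  positivity
end
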